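/- For every probability measure μ on 𝕋^d there exists a sequence of probability measures μ_n on Ξ_n converging weakly to μ such that limsup_{n→∞} ℐ_n(μ_n) ≤ J(μ). -/

import Mathlib

/-!
The functional `ℐ_n` is convex, and after expanding the square it reads
`ℐ_n(ν) = ∑_x ν(x) ∑_{y ∼ x} e^{-(n/2)(F(y)-F(x))} - ∑_{x ∼ y} √(ν(x)ν(y))`.
The first part converges to `∫ ∑ᵢ 2 cosh(∂ᵢF/2) dμ` along every sequence `ν → μ`, because the
exponents converge uniformly to `∓∂ᵢF/2` (`exp_increment_le`).  It remains to choose `ν` so flat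
that the second part tends to `2d`.

For this, smear every point `z` uniformly over a discrete box with `M = ⌊√n⌋` sites in each
direction whose corner is the lattice point just below `z`, and average over `μ` (`nuT`).  The box
has macroscopic size `M/n → 0`, so the averages converge weakly to `μ` (`tendsto_nuT`).  A shift
by one site loses only a fraction `1/M` of a box, and by the Cauchy-Schwarz inequality (concavity of
`(a, b) ↦ √(ab)`) the overlap of the mixture with its shift is at least the average of the overlaps,
hence at least `1 - 1/M` (`overlap_nuT`).

Lattice points are indexed by `(ℤ/n)^d`, so that translations are bijections and no
boundary terms appear.
-/

open Filter MeasureTheory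
open scoped ENNReal Classical

noncomputable section

/-- Discretization of the torus `𝕋^d = ℝ^d/ℤ^d`: the points `k/n`, `k ∈ {0,…,n-1}^d`,
taken as representatives in the fundamental domain `[0,1)^d`. -/
def XiT (d n : ℕ) : Finset (Fin d → ℝ) :=
  (Finset.univ : Finset (Fin d → Fin n)).image fun k i => (k i : ℝ) / n

/-- `x` and `y` are nearest neighbours of the discretized torus: `y - x ≡ ±eᵢ/n mod ℤ^d`. -/
def NbrT (d n : ℕ) (x y : Fin d → ℝ) : Prop :=
  ∃ i : Fin d, ∃ s : ℝ, (s = 1 ∨ s = -1) ∧ ∃ v : Fin d → ℤ,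
    ∀ j, y j = x j + (if j = i then s / n else 0) + (v j : ℝ)

/-- Partition function `Z_{F,n}`. -/
def ZT (d : ℕ) (F : (Fin d → ℝ) → ℝ) (n : ℕ) : ℝ :=
  ∑ x ∈ XiT d n, Real.exp (-(n : ℝ) * F x)

/-- Stationary measure `π_n(x) = e^{-nF(x)}/Z_{F,n}`. -/
def piT (d : ℕ) (F : (Fin d → ℝ) → ℝ) (n : ℕ) (x : Fin d → ℝ) : ℝ :=
  Real.exp (-(n : ℝ) * F x) / ZT d F n

/-- Jump rates `R_n(x,y) = e^{-(n/2)(F(y)-F(x))}` for nearest neighbours, `0` otherwise. -/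
def RT (d : ℕ) (F : (Fin d → ℝ) → ℝ) (n : ℕ) (x y : Fin d → ℝ) : ℝ :=
  if NbrT d n x y then Real.exp (-((n : ℝ) / 2) * (F y - F x)) else 0

/-- Level-two large deviations rate functional `ℐ_n`. -/
def IT (d : ℕ) (F : (Fin d → ℝ) → ℝ) (n : ℕ) (μ : (Fin d → ℝ) → ℝ) : ℝ :=
  (1 / 2) * ∑ x ∈ XiT d n, ∑ y ∈ (XiT d n).erase x,
    piT d F n x * RT d F n x y *
      (Real.sqrt (μ y / piT d F n y) - Real.sqrt (μ x / piT d F n x)) ^ 2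

/-- The function `G(x) = Σᵢ 2(cosh(∂ᵢF(x)/2) - 1)`. -/
def GT (d : ℕ) (F : (Fin d → ℝ) → ℝ) (x : Fin d → ℝ) : ℝ :=
  ∑ i : Fin d, 2 * (Real.cosh (fderiv ℝ F x (Pi.single i 1) / 2) - 1)

/-- A function on `ℝ^d` is `ℤ^d`-periodic, i.e. well defined on the torus. -/
def PerT (d : ℕ) (g : (Fin d → ℝ) → ℝ) : Prop :=
  ∀ (x : Fin d → ℝ) (v : Fin d → ℤ), g (fun i => x i + (v i : ℝ)) = g x

/-- The (Euclidean) torus distance. -/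
def tdistT (d : ℕ) (x y : Fin d → ℝ) : ℝ :=
  ⨅ v : Fin d → ℤ, Real.sqrt (∑ i, (x i - y i - (v i : ℝ)) ^ 2)

/-- Membership in the (torus) cube of side `ε` centered at `z`. -/
def InCubeT (d : ℕ) (ε : ℝ) (z x : Fin d → ℝ) : Prop :=
  ∃ v : Fin d → ℤ, ∀ i, |x i - z i - (v i : ℝ)| ≤ ε / 2

/-- The discretized cube `Q^n_ε(z) = Q_ε(z) ∩ Ξ_n`. -/
def QT (d : ℕ) (ε : ℝ) (z : Fin d → ℝ) (n : ℕ) : Finset (Fin d → ℝ) :=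
  (XiT d n).filter (InCubeT d ε z)

/-- The Hessian matrix of `F` at `x`. -/
def HessT (d : ℕ) (F : (Fin d → ℝ) → ℝ) (x : Fin d → ℝ) : Matrix (Fin d) (Fin d) ℝ :=
  Matrix.of fun i j => fderiv ℝ (fun y => fderiv ℝ F y (Pi.single j 1)) x (Pi.single i 1)

/-! ### The discrete torus as `(ℤ/n)^d` -/

/-- The lattice point of the fundamental domain with index `k ∈ (ℤ/n)^d`. -/
def pT (d n : ℕ) (k : Fin d → ZMod n) : Fin d → ℝ := fun i => ((k i).val : ℝ) / n

/-- The index of the lattice cell containing `x`; it is `ℤ^d`-periodic in `x`. -/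
def qT (d n : ℕ) (x : Fin d → ℝ) : Fin d → ZMod n := fun i => ((⌊(n : ℝ) * x i⌋ : ℤ) : ZMod n)

lemma qT_pT (d n : ℕ) [NeZero n] (k : Fin d → ZMod n) : qT d n (pT d n k) = k := by
  funext i
  have hn : (n : ℝ) ≠ 0 := Nat.cast_ne_zero.2 (NeZero.ne n)
  simp only [qT, pT]
  rw [mul_div_cancel₀ _ hn, Int.floor_natCast]
  simp

lemma pT_injective (d n : ℕ) [NeZero n] : Function.Injective (pT d n) :=
  Function.LeftInverse.injective (qT_pT d n)

lemma XiT_eq (d n : ℕ) [NeZero n] : XiT d n = Finset.univ.image (pT d n) := by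
  obtain ⟨m, rfl⟩ := Nat.exists_eq_succ_of_ne_zero (NeZero.ne n)
  rfl

lemma sum_XiT (d n : ℕ) [NeZero n] (f : (Fin d → ℝ) → ℝ) :
    ∑ x ∈ XiT d n, f x = ∑ k, f (pT d n k) := by
  rw [XiT_eq, Finset.sum_image]
  exact fun a _ b _ h => pT_injective d n h

lemma per_pT_intCast {d n : ℕ} [NeZero n] {g : (Fin d → ℝ) → ℝ} (hg : PerT d g) (a : Fin d → ℤ) :
    g (pT d n (fun i => (a i : ZMod n))) = g (fun i => (a i : ℝ) / n) := by
  have hn : (n : ℝ) ≠ 0 := Nat.cast_ne_zero.2 (NeZero.ne n)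
  rw [← hg _ (fun i => a i / n)]
  congr 1
  funext i
  simp only [pT]
  have h1 : (((a i : ZMod n).val : ℤ) : ℝ) = ((a i % n : ℤ) : ℝ) := by rw [ZMod.val_intCast]
  have h2 : ((a i % n : ℤ) : ℝ) + n * ((a i / n : ℤ) : ℝ) = a i := by
    exact_mod_cast Int.emod_add_mul_ediv (a i) n
  rw [Int.cast_natCast] at h1
  rw [h1, ← h2]
  field_simp

lemma per_pT_add_single {d n : ℕ} [NeZero n] {g : (Fin d → ℝ) → ℝ} (hg : PerT d g)
    (k : Fin d → ZMod n) (i : Fin d) (s : ℤ) :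
    g (pT d n (k + Pi.single i (s : ZMod n))) = g (pT d n k + Pi.single i ((s : ℝ) / n)) := by
  have h : k + Pi.single i (s : ZMod n) =
      fun j => ((((k j).val : ℤ) + (if j = i then s else 0) : ℤ) : ZMod n) := by
    funext j
    by_cases hj : j = i
    · subst hj; simp
    · simp [hj]
  rw [h, per_pT_intCast hg]
  congr 1
  funext j
  by_cases hj : j = i
  · subst hj; simp [pT, add_div]
  · simp [hj, pT]

lemma NbrT_pT {d n : ℕ} [NeZero n] {k l : Fin d → ZMod n} (h : NbrT d n (pT d n k) (pT d n l)) :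
    ∃ i, l = k + Pi.single i 1 ∨ l = k - Pi.single i 1 := by
  have hn : (n : ℝ) ≠ 0 := Nat.cast_ne_zero.2 (NeZero.ne n)
  have key : ∀ (i : Fin d) (s : ℤ) (v : Fin d → ℤ),
      (∀ j, pT d n l j = pT d n k j + (if j = i then (s : ℝ) / n else 0) + (v j : ℝ)) →
      l = k + Pi.single i (s : ZMod n) := by
    intro i s v hv
    funext j
    have h1 : ((l j).val : ℝ) = (k j).val + (if j = i then (s : ℝ) else 0) + n * v j := by
      have h0 := hv j
      simp only [pT] at h0
      split_ifs at h0 ⊢ <;> field_simp at h0 <;> linarith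
    have h2 : ((l j).val : ℤ) = (k j).val + (if j = i then s else 0) + n * v j := by
      split_ifs at h1 ⊢ <;> exact_mod_cast h1
    have h3 := congrArg (Int.cast : ℤ → ZMod n) h2
    by_cases hj : j = i
    · subst hj
      simpa using h3
    · simpa [hj] using h3
  obtain ⟨i, s, hs, v, hv⟩ := h
  refine ⟨i, ?_⟩
  rcases hs with rfl | rfl
  · left
    simpa using key i 1 v (by simpa using hv)
  · right
    have := key i (-1) v (by simpa using hv)
    rw [this, sub_eq_add_neg, ← Pi.single_neg]
    simp

/-! ### Periodic functions and increments of `F` -/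

lemma PerT.uniform {d : ℕ} {g : (Fin d → ℝ) → ℝ} (hg : PerT d g) (hc : Continuous g)
    {ε : ℝ} (hε : 0 < ε) :
    ∃ δ > 0, ∀ x y : Fin d → ℝ, dist x y < δ → |g x - g y| < ε := by
  have hK : IsCompact (Set.Icc (0 : Fin d → ℝ) 1) := isCompact_Icc
  have h := hK.uniformContinuousAt_of_continuousAt g (fun x _ => hc.continuousAt)
    (Metric.dist_mem_uniformity hε)
  obtain ⟨δ, hδ, h⟩ := Metric.mem_uniformity_dist.1 h
  refine ⟨δ, hδ, fun x y hxy => ?_⟩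
  have h1 := hg x (fun i => -⌊x i⌋)
  have h2 := hg y (fun i => -⌊x i⌋)
  rw [← h1, ← h2, ← Real.dist_eq]
  refine h (a := fun i => x i + ((-⌊x i⌋ : ℤ) : ℝ)) (b := fun i => y i + ((-⌊x i⌋ : ℤ) : ℝ)) ?_ ?_
  · have : dist (fun i => x i + ((-⌊x i⌋ : ℤ) : ℝ)) (fun i => y i + ((-⌊x i⌋ : ℤ) : ℝ)) =
        dist x y := dist_add_right x y (fun i => ((-⌊x i⌋ : ℤ) : ℝ))
    rwa [this]
  · refine ⟨fun i => ?_, fun i => ?_⟩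
    · have := Int.floor_le (x i)
      simp only [Pi.zero_apply, Int.cast_neg]
      linarith
    · have := Int.lt_floor_add_one (x i)
      simp only [Pi.one_apply, Int.cast_neg]
      linarith

lemma PerT.bounded {d : ℕ} {g : (Fin d → ℝ) → ℝ} (hg : PerT d g) (hc : Continuous g) :
    ∃ C, ∀ x, ‖g x‖ ≤ C := by
  have hK : IsCompact (Set.Icc (0 : Fin d → ℝ) 1) := isCompact_Icc
  obtain ⟨C, hC⟩ := hK.exists_bound_of_continuousOn hc.continuousOn
  refine ⟨C, fun x => ?_⟩
  rw [← hg x (fun i => -⌊x i⌋)]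
  apply hC
  refine ⟨fun i => ?_, fun i => ?_⟩
  · have := Int.floor_le (x i)
    simp only [Pi.zero_apply, Int.cast_neg]
    linarith
  · have := Int.lt_floor_add_one (x i)
    simp only [Pi.one_apply, Int.cast_neg]
    linarith

lemma PerT.integrable {d : ℕ} {g : (Fin d → ℝ) → ℝ} (hg : PerT d g) (hc : Continuous g)
    (μ : Measure (Fin d → ℝ)) [IsProbabilityMeasure μ] : Integrable g μ := by
  obtain ⟨C, hC⟩ := hg.bounded hc
  exact Integrable.of_bound hc.aestronglyMeasurable C (Eventually.of_forall hC)

lemma PerT.fderiv_apply {d : ℕ} {F : (Fin d → ℝ) → ℝ} (hF : PerT d F) (e : Fin d → ℝ) :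
    PerT d (fun x => fderiv ℝ F x e) := by
  intro x v
  have h : (fun y => F (y + fun i => (v i : ℝ))) = F := funext fun y => hF y v
  have h2 := fderiv_comp_add_right (𝕜 := ℝ) (f := F) (x := x) (fun i => (v i : ℝ))
  rw [h] at h2
  change fderiv ℝ F (x + fun i => (v i : ℝ)) e = fderiv ℝ F x e
  rw [← h2]

lemma continuous_partial {d : ℕ} {F : (Fin d → ℝ) → ℝ} (hF : ContDiff ℝ 2 F) (e : Fin d → ℝ) :
    Continuous (fun x => fderiv ℝ F x e) :=
  (hF.continuous_fderiv (by norm_num)).clm_apply continuous_const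

lemma exists_increment {d : ℕ} {F : (Fin d → ℝ) → ℝ} (hF : ContDiff ℝ 2 F) (x : Fin d → ℝ)
    (i : Fin d) (t : ℝ) :
    ∃ y, dist y x ≤ |t| ∧ F (x + Pi.single i t) - F x = t * fderiv ℝ F y (Pi.single i 1) := by
  have hs : (Pi.single i t : Fin d → ℝ) = t • Pi.single i 1 := by
    rw [← Pi.single_smul]; simp
  have hd : ∀ θ : ℝ, HasDerivAt (fun θ : ℝ => F (x + θ • Pi.single i t))
      (fderiv ℝ F (x + θ • Pi.single i t) (Pi.single i t)) θ := by
    intro θ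
    have h1 : HasFDerivAt F (fderiv ℝ F (x + θ • Pi.single i t)) (x + θ • Pi.single i t) :=
      (hF.differentiable (by norm_num) _).hasFDerivAt
    have h2 : HasDerivAt (fun θ : ℝ => x + θ • (Pi.single i t : Fin d → ℝ)) (Pi.single i t) θ := by
      simpa using ((hasDerivAt_id θ).smul_const (Pi.single i t : Fin d → ℝ)).const_add x
    exact h1.comp_hasDerivAt θ h2
  obtain ⟨θ, hθ, h⟩ := exists_hasDerivAt_eq_slope (fun θ : ℝ => F (x + θ • Pi.single i t)) _
    (zero_lt_one' ℝ) (fun θ _ => (hd θ).continuousAt.continuousWithinAt) (fun θ _ => hd θ)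
  refine ⟨x + θ • Pi.single i t, ?_, ?_⟩
  · rw [dist_eq_norm, add_sub_cancel_left, norm_smul, Pi.norm_single, Real.norm_eq_abs,
      Real.norm_eq_abs, abs_of_pos hθ.1]
    exact mul_le_of_le_one_left (abs_nonneg _) hθ.2.le
  · simp only [one_smul, zero_smul, add_zero, sub_zero, div_one] at h
    rw [← h]
    conv_lhs => rw [hs]
    rw [map_smul, smul_eq_mul, hs]

/-- Uniform upper bound of the jump rates by their limits `e^{∓∂ᵢF/2}`, up to `ε`. The mean value
theorem replaces the increment by a partial derivative at a point within distance `1/n`. -/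
lemma exp_increment_le {d : ℕ} {F : (Fin d → ℝ) → ℝ} (hper : PerT d F) (hF : ContDiff ℝ 2 F)
    (i : Fin d) (s : ℤ) (hs : |(s : ℝ)| = 1) {ε : ℝ} (hε : 0 < ε) :
    ∀ᶠ n : ℕ in atTop, ∀ x, Real.exp (-((n : ℝ) / 2) * (F (x + Pi.single i ((s : ℝ) / n)) - F x)) ≤
      Real.exp (-(s : ℝ) * (fderiv ℝ F x (Pi.single i 1) / 2)) + ε := by
  have hp : PerT d (fun x => Real.exp (-(s : ℝ) * (fderiv ℝ F x (Pi.single i 1) / 2))) := by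
    intro x v
    have := hper.fderiv_apply (Pi.single i 1) x v
    simp only at this ⊢
    rw [this]
  have hc : Continuous (fun x => Real.exp (-(s : ℝ) * (fderiv ℝ F x (Pi.single i 1) / 2))) :=
    Real.continuous_exp.comp (continuous_const.mul ((continuous_partial hF _).div_const 2))
  obtain ⟨δ, hδ, h⟩ := hp.uniform hc hε
  have hl : ∀ᶠ n : ℕ in atTop, 1 / (n : ℝ) < δ :=
    tendsto_one_div_atTop_nhds_zero_nat.eventually (gt_mem_nhds hδ)
  filter_upwards [hl, eventually_gt_atTop 0] with n hn hn0 x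
  have hn0' : (0 : ℝ) < n := by exact_mod_cast hn0
  obtain ⟨y, hy, hxy⟩ := exists_increment hF x i ((s : ℝ) / n)
  rw [abs_div, hs, abs_of_pos hn0'] at hy
  have h1 := (abs_lt.1 (h y x (hy.trans_lt hn))).2
  have h2 : -((n : ℝ) / 2) * (F (x + Pi.single i ((s : ℝ) / n)) - F x) =
      -(s : ℝ) * (fderiv ℝ F y (Pi.single i 1) / 2) := by
    rw [hxy]; field_simp
  rw [h2]
  linarith

lemma PerT_GT {d : ℕ} {F : (Fin d → ℝ) → ℝ} (hper : PerT d F) : PerT d (GT d F) := by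
  intro x v
  refine Finset.sum_congr rfl fun i _ => ?_
  have h := hper.fderiv_apply (Pi.single i 1) x v
  simp only at h
  rw [h]

lemma continuous_GT {d : ℕ} {F : (Fin d → ℝ) → ℝ} (hF : ContDiff ℝ 2 F) :
    Continuous (GT d F) :=
  continuous_finsetSum _ fun _ _ => continuous_const.mul
    ((Real.continuous_cosh.comp ((continuous_partial hF _).div_const 2)).sub continuous_const)

/-! ### The smeared measures -/

/-- Uniform probability weights on `{0, …, M-1} ⊆ ℤ/n`. -/
def uT (n M : ℕ) (t : ZMod n) : ℝ := if t.val < M then 1 / (M : ℝ) else 0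

/-- Uniform probability weights on the box `{0, …, M-1}^d ⊆ (ℤ/n)^d`. -/
def boxT (d n M : ℕ) (m : Fin d → ZMod n) : ℝ := ∏ i, uT n M (m i)

/-- The mixture over `z ∼ μ` of the uniform measures on the box of side `M` with corner
`qT d n z`. -/
def nuT (d n M : ℕ) (μ : Measure (Fin d → ℝ)) (k : Fin d → ZMod n) : ℝ :=
  ∫ z, boxT d n M (k - qT d n z) ∂μ

/-- The mass of the lattice cell with index `c`. -/
def wT (d n : ℕ) (μ : Measure (Fin d → ℝ)) (c : Fin d → ZMod n) : ℝ :=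
  μ.real (qT d n ⁻¹' {c})

lemma measurableSet_cell (d n : ℕ) (c : Fin d → ZMod n) : MeasurableSet (qT d n ⁻¹' {c}) := by
  have : qT d n ⁻¹' {c} = ⋂ i, {x | ((⌊(n : ℝ) * x i⌋ : ℤ) : ZMod n) = c i} := by
    ext x; simp [qT, funext_iff]
  rw [this]
  refine MeasurableSet.iInter fun i => ?_
  have hm : Measurable (fun x : Fin d → ℝ => ⌊(n : ℝ) * x i⌋) :=
    Int.measurable_floor.comp ((measurable_pi_apply i).const_mul _)
  exact hm (MeasurableSet.of_discrete (s := {a : ℤ | (a : ZMod n) = c i}))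

lemma comp_qT_eq {d n : ℕ} [NeZero n] (h : (Fin d → ZMod n) → ℝ) :
    (fun x => h (qT d n x)) = fun x => ∑ c, (qT d n ⁻¹' {c}).indicator (fun _ => h c) x := by
  funext x
  simp [Set.indicator_apply]

lemma integrable_comp_qT {d n : ℕ} [NeZero n] (μ : Measure (Fin d → ℝ)) [IsProbabilityMeasure μ]
    (h : (Fin d → ZMod n) → ℝ) : Integrable (fun x => h (qT d n x)) μ := by
  rw [comp_qT_eq]
  exact integrable_finsetSum _ fun c _ =>
    (integrable_const _).indicator (measurableSet_cell d n c)

lemma integral_comp_qT {d n : ℕ} [NeZero n] (μ : Measure (Fin d → ℝ)) [IsProbabilityMeasure μ]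
    (h : (Fin d → ZMod n) → ℝ) : ∫ x, h (qT d n x) ∂μ = ∑ c, wT d n μ c * h c := by
  rw [comp_qT_eq, integral_finsetSum]
  · refine Finset.sum_congr rfl fun c _ => ?_
    rw [integral_indicator_const _ (measurableSet_cell d n c), smul_eq_mul, wT]
  · exact fun c _ => (integrable_const _).indicator (measurableSet_cell d n c)

lemma wT_nonneg {d n : ℕ} (μ : Measure (Fin d → ℝ)) (c : Fin d → ZMod n) : 0 ≤ wT d n μ c :=
  measureReal_nonneg

lemma sum_wT {d n : ℕ} [NeZero n] (μ : Measure (Fin d → ℝ)) [IsProbabilityMeasure μ] :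
    ∑ c, wT d n μ c = 1 := by
  have := integral_comp_qT (d := d) (n := n) μ (fun _ => 1)
  simpa using this.symm

lemma uT_nonneg (n M : ℕ) (t : ZMod n) : 0 ≤ uT n M t := by
  unfold uT; split_ifs <;> positivity

lemma boxT_nonneg (d n M : ℕ) (m : Fin d → ZMod n) : 0 ≤ boxT d n M m :=
  Finset.prod_nonneg fun _ _ => uT_nonneg _ _ _

lemma nuT_nonneg (d n M : ℕ) (μ : Measure (Fin d → ℝ)) (k : Fin d → ZMod n) :
    0 ≤ nuT d n M μ k := integral_nonneg fun _ => boxT_nonneg _ _ _ _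

lemma nuT_eq {d n : ℕ} [NeZero n] (M : ℕ) (μ : Measure (Fin d → ℝ)) [IsProbabilityMeasure μ]
    (k : Fin d → ZMod n) : nuT d n M μ k = ∑ c, wT d n μ c * boxT d n M (k - c) :=
  integral_comp_qT μ (fun c => boxT d n M (k - c))

lemma sum_zmod_ite (n K : ℕ) [NeZero n] (hK : K ≤ n) (a : ℝ) :
    ∑ t : ZMod n, (if t.val < K then a else 0) = K * a := by
  obtain ⟨m, rfl⟩ := Nat.exists_eq_succ_of_ne_zero (NeZero.ne n)
  have h : ∑ t : ZMod (m + 1), (if t.val < K then a else 0) =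
      ∑ r ∈ Finset.range (m + 1), (if r < K then a else 0) :=
    Fin.sum_univ_eq_sum_range (fun r => if r < K then a else 0) (m + 1)
  have h2 : (Finset.range (m + 1)).filter (fun r => r < K) = Finset.range K := by
    ext r; simp only [Finset.mem_filter, Finset.mem_range]; omega
  rw [h, ← Finset.sum_filter, h2]
  simp

lemma sum_uT {n M : ℕ} [NeZero n] (hM : 0 < M) (hMn : M ≤ n) : ∑ t, uT n M t = 1 := by
  unfold uT
  rw [sum_zmod_ite n M hMn]
  field_simp

lemma sum_boxT {d n M : ℕ} [NeZero n] (hM : 0 < M) (hMn : M ≤ n) : ∑ m, boxT d n M m = 1 := by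
  unfold boxT
  rw [← Fintype.prod_sum (fun (_ : Fin d) t => uT n M t)]
  simp [sum_uT hM hMn]

lemma sum_nuT_mul {d n : ℕ} [NeZero n] (M : ℕ) (μ : Measure (Fin d → ℝ)) [IsProbabilityMeasure μ]
    (h : (Fin d → ZMod n) → ℝ) :
    ∑ k, nuT d n M μ k * h k = ∑ c, wT d n μ c * ∑ m, boxT d n M m * h (m + c) := by
  simp_rw [nuT_eq, Finset.sum_mul]
  rw [Finset.sum_comm]
  refine Finset.sum_congr rfl fun c _ => ?_
  rw [Finset.mul_sum, ← Equiv.sum_comp (Equiv.addRight c)]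
  simp [mul_assoc]

lemma sum_nuT {d n M : ℕ} [NeZero n] (hM : 0 < M) (hMn : M ≤ n) (μ : Measure (Fin d → ℝ))
    [IsProbabilityMeasure μ] : ∑ k, nuT d n M μ k = 1 := by
  have := sum_nuT_mul (n := n) M μ (fun _ => 1)
  simpa [sum_boxT hM hMn, sum_wT] using this

/-- A box loses only a fraction `1/M` of its mass under a unit shift. -/
lemma overlap_boxT {d n M : ℕ} [NeZero n] (hM : 0 < M) (hMn : M ≤ n) (i : Fin d) :
    1 - 1 / (M : ℝ) ≤
      ∑ m, Real.sqrt (boxT d n M m) * Real.sqrt (boxT d n M (m + Pi.single i 1)) := by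
  -- `b` is the uniform weight on the sites that stay in the box after the shift.
  set b : Fin d → ZMod n → ℝ := fun j t =>
    if t.val < (if j = i then M - 1 else M) then 1 / (M : ℝ) else 0 with hb
  have hM' : (M : ℝ) ≠ 0 := by positivity
  have hsum : ∑ m : Fin d → ZMod n, ∏ j, b j (m j) = 1 - 1 / (M : ℝ) := by
    rw [← Fintype.prod_sum b, ← Finset.mul_prod_erase _ _ (Finset.mem_univ i),
      Finset.prod_eq_one]
    · simp only [hb, if_true]
      rw [sum_zmod_ite n (M - 1) (by omega), Nat.cast_sub hM]
      field_simp
      simp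
    · intro j hj
      simp only [hb, if_neg (Finset.ne_of_mem_erase hj)]
      rw [sum_zmod_ite n M hMn]
      field_simp
  rw [← hsum]
  refine Finset.sum_le_sum fun m _ => ?_
  by_cases hall : ∀ j, (m j).val < (if j = i then M - 1 else M)
  · have h1 : ∀ j, (m j).val < M := fun j => by
      have := hall j
      split_ifs at this <;> omega
    have h2 : ∀ j, ((m + Pi.single i 1 : Fin d → ZMod n) j).val < M := fun j => by
      by_cases hj : j = i
      · subst hj
        have h3 := hall j
        simp only [if_true] at h3
        have h4 : (m j + 1).val ≤ (m j).val + 1 := by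
          refine (ZMod.val_add_le _ _).trans ?_
          have : (1 : ZMod n).val ≤ 1 := by
            rw [ZMod.val_one_eq_one_mod]; exact Nat.mod_le _ _
          omega
        simp only [Pi.add_apply, Pi.single_eq_same]
        omega
      · simpa [hj] using h1 j
    have e1 : boxT d n M m = ∏ j, b j (m j) := by
      refine Finset.prod_congr rfl fun j _ => ?_
      simp only [uT, hb, if_pos (h1 j), if_pos (hall j)]
    have e2 : boxT d n M (m + Pi.single i 1) = ∏ j, b j (m j) := by
      refine Finset.prod_congr rfl fun j _ => ?_
      simp only [uT, hb, if_pos (h2 j), if_pos (hall j)]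
    rw [e1, e2, Real.mul_self_sqrt (by rw [← e1]; exact boxT_nonneg _ _ _ _)]
  · push Not at hall
    obtain ⟨j, hj⟩ := hall
    rw [Finset.prod_eq_zero (Finset.mem_univ j)]
    · positivity
    · simp only [hb]
      rw [if_neg (not_lt.2 hj)]

/-- Cauchy-Schwarz transfers the overlap bound from single boxes to their mixture. -/
lemma overlap_nuT {d n M : ℕ} [NeZero n] (hM : 0 < M) (hMn : M ≤ n) (μ : Measure (Fin d → ℝ))
    [IsProbabilityMeasure μ] (i : Fin d) :
    1 - 1 / (M : ℝ) ≤
      ∑ k, Real.sqrt (nuT d n M μ k) * Real.sqrt (nuT d n M μ (k + Pi.single i 1)) := by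
  have h1 : ∀ k : Fin d → ZMod n,
      ∑ c, wT d n μ c * (Real.sqrt (boxT d n M (k - c)) *
        Real.sqrt (boxT d n M (k - c + Pi.single i 1))) ≤
      Real.sqrt (nuT d n M μ k) * Real.sqrt (nuT d n M μ (k + Pi.single i 1)) := by
    intro k
    rw [nuT_eq, nuT_eq]
    refine le_trans (le_of_eq ?_) (Real.sum_sqrt_mul_sqrt_le _
      (fun c => mul_nonneg (wT_nonneg μ c) (boxT_nonneg d n M (k - c)))
      (fun c => mul_nonneg (wT_nonneg μ c) (boxT_nonneg d n M (k + Pi.single i 1 - c))))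
    refine Finset.sum_congr rfl fun c _ => ?_
    rw [Real.sqrt_mul (wT_nonneg μ c), Real.sqrt_mul (wT_nonneg μ c), mul_mul_mul_comm,
      Real.mul_self_sqrt (wT_nonneg μ c), add_sub_right_comm]
  refine le_trans ?_ (Finset.sum_le_sum fun k _ => h1 k)
  rw [Finset.sum_comm]
  have h2 : ∀ c : Fin d → ZMod n, ∑ k, wT d n μ c * (Real.sqrt (boxT d n M (k - c)) *
        Real.sqrt (boxT d n M (k - c + Pi.single i 1))) =
      wT d n μ c * ∑ m, Real.sqrt (boxT d n M m) * Real.sqrt (boxT d n M (m + Pi.single i 1)) := by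
    intro c
    rw [Finset.mul_sum, ← Equiv.sum_comp (Equiv.addRight c)]
    simp
  simp_rw [h2]
  rw [← Finset.sum_mul, sum_wT, one_mul]
  exact overlap_boxT hM hMn i

/-- Averaging `g` over the box attached to `x` changes `g x` little, since every site of that box
has, modulo `ℤ^d`, a representative at distance at most `M/n` from `x`. -/
lemma box_average_close {d n M : ℕ} [NeZero n] (hM : 0 < M) (hMn : M ≤ n)
    {g : (Fin d → ℝ) → ℝ} (hg : PerT d g) {ε δ : ℝ}
    (h : ∀ x y : Fin d → ℝ, dist x y < δ → |g x - g y| < ε) (hδ : (M : ℝ) / n < δ)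
    (x : Fin d → ℝ) :
    |∑ m, boxT d n M m * g (pT d n (m + qT d n x)) - g x| ≤ ε := by
  have hn : (0 : ℝ) < n := Nat.cast_pos.2 (Nat.pos_of_ne_zero (NeZero.ne n))
  have e : ∑ m, boxT d n M m * g (pT d n (m + qT d n x)) - g x =
      ∑ m, boxT d n M m * (g (pT d n (m + qT d n x)) - g x) := by
    simp_rw [mul_sub]
    rw [Finset.sum_sub_distrib, ← Finset.sum_mul, sum_boxT hM hMn, one_mul]
  rw [e]
  have : ∑ m : Fin d → ZMod n, boxT d n M m * ε = ε := by
    rw [← Finset.sum_mul, sum_boxT hM hMn, one_mul]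
  refine (Finset.abs_sum_le_sum_abs _ _).trans (le_trans (Finset.sum_le_sum fun m _ => ?_) this.le)
  rw [abs_mul, abs_of_nonneg (boxT_nonneg _ _ _ _)]
  by_cases hm : ∀ j, (m j).val < M
  · refine mul_le_mul_of_nonneg_left ?_ (boxT_nonneg _ _ _ _)
    have hc : m + qT d n x = fun j => ((((m j).val : ℤ) + ⌊(n : ℝ) * x j⌋ : ℤ) : ZMod n) := by
      funext j; simp [qT]
    rw [hc, per_pT_intCast hg]
    refine (h _ _ (lt_of_le_of_lt ?_ hδ)).le
    refine (dist_pi_le_iff (by positivity)).2 fun j => ?_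
    have h1 := Int.floor_le ((n : ℝ) * x j)
    have h2 := Int.lt_floor_add_one ((n : ℝ) * x j)
    have h3 : ((m j).val : ℝ) + 1 ≤ M := by exact_mod_cast hm j
    have h4 : (0 : ℝ) ≤ (m j).val := Nat.cast_nonneg _
    have e2 : ((((m j).val : ℤ) + ⌊(n : ℝ) * x j⌋ : ℤ) : ℝ) / n - x j =
        ((m j).val + ⌊(n : ℝ) * x j⌋ - n * x j) / n := by
      push_cast
      field_simp
    rw [Real.dist_eq, e2, abs_div, abs_of_pos hn]
    gcongr
    rw [abs_le]
    constructor <;> linarith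
  · push Not at hm
    obtain ⟨j, hj⟩ := hm
    have : boxT d n M m = 0 := Finset.prod_eq_zero (Finset.mem_univ j) (by
      rw [uT, if_neg (not_lt.2 hj)])
    simp [this]

lemma sqrt_div_tendsto : Tendsto (fun n : ℕ => (Nat.sqrt n : ℝ) / n) atTop (nhds 0) := by
  have h : Tendsto (fun n : ℕ => 1 / Real.sqrt n) atTop (nhds 0) :=
    tendsto_const_nhds.div_atTop (Real.tendsto_sqrt_atTop.comp tendsto_natCast_atTop_atTop)
  refine squeeze_zero (fun n => by positivity) (fun n => ?_) h
  rcases Nat.eq_zero_or_pos n with rfl | hn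
  · simp
  have hn' : (0 : ℝ) < n := Nat.cast_pos.2 hn
  have h1 : (Nat.sqrt n : ℝ) ≤ Real.sqrt n := Real.nat_sqrt_le_real_sqrt
  rw [← Real.sqrt_div_self']
  gcongr

lemma natSqrt_tendsto : Tendsto (fun n : ℕ => Nat.sqrt n) atTop atTop := by
  refine tendsto_atTop.2 fun b => ?_
  filter_upwards [eventually_ge_atTop (b * b)] with n hn
  exact Nat.le_sqrt.2 hn

lemma tendsto_nuT {d : ℕ} (μ : Measure (Fin d → ℝ)) [IsProbabilityMeasure μ]
    {g : (Fin d → ℝ) → ℝ} (hc : Continuous g) (hg : PerT d g) :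
    Tendsto (fun n => ∑ x ∈ XiT d n, nuT d n (Nat.sqrt n) μ (qT d n x) * g x) atTop
      (nhds (∫ x, g x ∂μ)) := by
  rw [Metric.tendsto_nhds]
  intro ε hε
  obtain ⟨δ, hδ, h⟩ := hg.uniform hc (half_pos hε)
  filter_upwards [sqrt_div_tendsto.eventually (gt_mem_nhds hδ), eventually_gt_atTop 0]
    with n hn hn0
  have : NeZero n := ⟨hn0.ne'⟩
  have hM : 0 < Nat.sqrt n := Nat.sqrt_pos.2 hn0
  rw [sum_XiT]
  simp_rw [qT_pT]
  rw [sum_nuT_mul _ μ (fun k => g (pT d n k)),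
    ← integral_comp_qT μ (fun c => ∑ m, boxT d n (Nat.sqrt n) m * g (pT d n (m + c))),
    Real.dist_eq, ← integral_sub (integrable_comp_qT μ
      (fun c => ∑ m, boxT d n (Nat.sqrt n) m * g (pT d n (m + c)))) (hg.integrable hc μ),
    ← Real.norm_eq_abs]
  refine lt_of_le_of_lt (norm_integral_le_of_norm_le_const (C := ε / 2)
    (Eventually.of_forall fun x => ?_)) ?_
  · exact box_average_close hM (Nat.sqrt_le_self n) hg h hn x
  · simp [hε]

/-! ### The upper bound for the rate functional -/

/-- The contribution of one edge, after expanding the square, to `ℐ_n`. -/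
lemma edge_identity (n A B Z a b : ℝ) (hZ : 0 < Z) (ha : 0 ≤ a) (hb : 0 ≤ b) :
    Real.exp (-n * A) / Z * Real.exp (-(n / 2) * (B - A)) *
      (Real.sqrt (b / (Real.exp (-n * B) / Z)) - Real.sqrt (a / (Real.exp (-n * A) / Z))) ^ 2 =
    b * Real.exp (-(n / 2) * (A - B)) + a * Real.exp (-(n / 2) * (B - A)) -
      2 * (Real.sqrt a * Real.sqrt b) := by
  have key : ∀ c C : ℝ, 0 ≤ c → Real.sqrt (c / (Real.exp (-n * C) / Z)) =
      Real.sqrt c * (Real.exp (n / 2 * C) * Real.sqrt Z) := by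
    intro c C hc
    have : c / (Real.exp (-n * C) / Z) = c * (Real.exp (n / 2 * C) ^ 2 * Z) := by
      have h : Real.exp (n / 2 * C) ^ 2 = (Real.exp (-n * C))⁻¹ := by
        rw [← Real.exp_nat_mul, ← Real.exp_neg]; congr 1; push_cast; ring
      rw [h]
      field_simp
    rw [this, Real.sqrt_mul hc, Real.sqrt_mul (by positivity), Real.sqrt_sq (by positivity)]
  rw [key b B hb, key a A ha]
  have e1 : Real.exp (-n * A) = Real.exp (-(n / 2 * A)) ^ 2 := by
    rw [← Real.exp_nat_mul]; congr 1; push_cast; ring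
  have e2 : Real.exp (-(n / 2) * (B - A)) = Real.exp (n / 2 * A) * Real.exp (-(n / 2 * B)) := by
    rw [← Real.exp_add]; congr 1; ring
  have e3 : Real.exp (-(n / 2) * (A - B)) = Real.exp (n / 2 * B) * Real.exp (-(n / 2 * A)) := by
    rw [← Real.exp_add]; congr 1; ring
  have hZ2 : Real.sqrt Z ^ 2 = Z := Real.sq_sqrt hZ.le
  have ha2 : Real.sqrt a ^ 2 = a := Real.sq_sqrt ha
  have hb2 : Real.sqrt b ^ 2 = b := Real.sq_sqrt hb
  rw [e1, e2, e3, Real.exp_neg, Real.exp_neg]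
  have hx := Real.exp_pos (n / 2 * A)
  have hy := Real.exp_pos (n / 2 * B)
  generalize Real.exp (n / 2 * A) = X at *
  generalize Real.exp (n / 2 * B) = Y at *
  generalize Real.sqrt a = p at *
  generalize Real.sqrt b = q at *
  subst ha2 hb2
  have : (q * (Y * Real.sqrt Z) - p * (X * Real.sqrt Z)) ^ 2 = (q * Y - p * X) ^ 2 * Z := by
    rw [← hZ2, Real.sqrt_sq (Real.sqrt_nonneg _)]; ring
  rw [this]
  field_simp
  ring

lemma ZT_pos {d n : ℕ} [NeZero n] (F : (Fin d → ℝ) → ℝ) : 0 < ZT d F n := by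
  unfold ZT
  rw [sum_XiT]
  exact Finset.sum_pos (fun _ _ => Real.exp_pos _) Finset.univ_nonempty

/-- The expanded square, with each edge `{k, k + eᵢ}` counted once. For `n ≤ 2` different `(k, i)`
may give the same pair of neighbours, or a loop, whence only an inequality. -/
lemma IT_le {d n : ℕ} [NeZero n] {F : (Fin d → ℝ) → ℝ} (hF : PerT d F)
    (ν : (Fin d → ZMod n) → ℝ) (hν : ∀ k, 0 ≤ ν k) :
    IT d F n (fun x => ν (qT d n x)) ≤
      ∑ i, ((∑ k, ν k *
        (Real.exp (-((n : ℝ) / 2) *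
            (F (pT d n k + Pi.single i (((-1 : ℤ) : ℝ) / n)) - F (pT d n k))) +
          Real.exp (-((n : ℝ) / 2) *
            (F (pT d n k + Pi.single i (((1 : ℤ) : ℝ) / n)) - F (pT d n k)))))
        - 2 * ∑ k, Real.sqrt (ν k) * Real.sqrt (ν (k + Pi.single i 1))) := by
  set f : (Fin d → ZMod n) → ℝ := fun k => F (pT d n k) with hf
  set T : (Fin d → ZMod n) → (Fin d → ZMod n) → ℝ := fun k l =>
    ν l * Real.exp (-((n : ℝ) / 2) * (f k - f l)) + ν k * Real.exp (-((n : ℝ) / 2) * (f l - f k)) -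
      2 * (Real.sqrt (ν k) * Real.sqrt (ν l)) with hT
  have hTe : ∀ k l, Real.exp (-(n : ℝ) * f k) / ZT d F n *
      Real.exp (-((n : ℝ) / 2) * (f l - f k)) *
      (Real.sqrt (ν l / (Real.exp (-(n : ℝ) * f l) / ZT d F n)) -
        Real.sqrt (ν k / (Real.exp (-(n : ℝ) * f k) / ZT d F n))) ^ 2 = T k l := fun k l =>
    edge_identity n (f k) (f l) (ZT d F n) (ν k) (ν l) (ZT_pos F) (hν k) (hν l)
  have hT0 : ∀ k l, 0 ≤ T k l := by
    intro k l
    rw [← hTe]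
    have := (ZT_pos (n := n) F).le
    positivity
  have hTs : ∀ k l, T k l = T l k := by
    intro k l; simp only [hT]; ring
  set t : (Fin d → ℝ) → (Fin d → ℝ) → ℝ := fun x y =>
    piT d F n x * RT d F n x y *
      (Real.sqrt (ν (qT d n y) / piT d F n y) - Real.sqrt (ν (qT d n x) / piT d F n x)) ^ 2 with ht
  have ht0 : ∀ x y, 0 ≤ t x y := by
    intro x y
    have := (ZT_pos (n := n) F).le
    have h1 : 0 ≤ piT d F n x := by unfold piT; positivity
    have h2 : 0 ≤ RT d F n x y := by unfold RT; split_ifs <;> positivity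
    simp only [ht]
    positivity
  have hedge : ∀ k l, t (pT d n k) (pT d n l) ≤
      ∑ i, ((if l = k + Pi.single i 1 then T k l else 0) +
        (if l = k - Pi.single i 1 then T k l else 0)) := by
    intro k l
    have hnn : ∀ i : Fin d, 0 ≤ ((if l = k + Pi.single i 1 then T k l else 0) +
        (if l = k - Pi.single i 1 then T k l else 0)) := by
      intro i
      have := hT0 k l
      split_ifs <;> positivity
    by_cases hN : NbrT d n (pT d n k) (pT d n l)
    · have e : t (pT d n k) (pT d n l) = T k l := by
        rw [← hTe]
        simp only [ht, RT, if_pos hN, piT, qT_pT, hf]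
      rw [e]
      obtain ⟨i, hi⟩ := NbrT_pT hN
      refine le_trans ?_ (Finset.single_le_sum (fun i _ => hnn i) (Finset.mem_univ i))
      have := hT0 k l
      rcases hi with hi | hi
      · rw [if_pos hi]
        split_ifs <;> linarith
      · rw [if_pos hi]
        split_ifs <;> linarith
    · have e : t (pT d n k) (pT d n l) = 0 := by
        simp only [ht, RT, if_neg hN, mul_zero, zero_mul]
      rw [e]
      exact Finset.sum_nonneg fun i _ => hnn i
  have hrow : ∀ k, ∑ y ∈ (XiT d n).erase (pT d n k), t (pT d n k) y ≤
      ∑ i, (T k (k + Pi.single i 1) + T k (k - Pi.single i 1)) := by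
    intro k
    refine (Finset.sum_le_sum_of_subset_of_nonneg (Finset.erase_subset _ _)
      fun y _ _ => ht0 _ y).trans ?_
    rw [sum_XiT]
    refine (Finset.sum_le_sum fun l _ => hedge k l).trans (le_of_eq ?_)
    rw [Finset.sum_comm]
    refine Finset.sum_congr rfl fun i _ => ?_
    rw [Finset.sum_add_distrib]
    simp
  have hback : ∀ i : Fin d, ∑ k, T k (k - Pi.single i 1) = ∑ k, T k (k + Pi.single i 1) := by
    intro i
    rw [← Equiv.sum_comp (Equiv.addRight (Pi.single i 1 : Fin d → ZMod n))]
    refine Finset.sum_congr rfl fun k _ => ?_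
    simp [hTs]
  have h1 : IT d F n (fun x => ν (qT d n x)) ≤ ∑ i, ∑ k, T k (k + Pi.single i 1) := by
    have h2 : ∑ x ∈ XiT d n, ∑ y ∈ (XiT d n).erase x, t x y ≤
        2 * ∑ i, ∑ k, T k (k + Pi.single i 1) := by
      rw [sum_XiT]
      refine (Finset.sum_le_sum fun k _ => hrow k).trans (le_of_eq ?_)
      rw [Finset.sum_comm, Finset.mul_sum]
      refine Finset.sum_congr rfl fun i _ => ?_
      rw [Finset.sum_add_distrib, hback]
      ring
    have h3 : IT d F n (fun x => ν (qT d n x)) =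
      (1 / 2) * ∑ x ∈ XiT d n, ∑ y ∈ (XiT d n).erase x, t x y := rfl
    rw [h3]
    linarith
  refine h1.trans (le_of_eq (Finset.sum_congr rfl fun i _ => ?_))
  have hp : ∀ k, F (pT d n k + Pi.single i (((1 : ℤ) : ℝ) / n)) = f (k + Pi.single i 1) := by
    intro k
    rw [← per_pT_add_single hF]
    simp [hf]
  have hm : ∀ k, F (pT d n k + Pi.single i (((-1 : ℤ) : ℝ) / n)) = f (k - Pi.single i 1) := by
    intro k
    rw [← per_pT_add_single hF, sub_eq_add_neg, ← Pi.single_neg]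
    simp [hf]
  have hshift : ∑ k, ν k * Real.exp (-((n : ℝ) / 2) * (f (k - Pi.single i 1) - f k)) =
      ∑ k, ν (k + Pi.single i 1) * Real.exp (-((n : ℝ) / 2) * (f k - f (k + Pi.single i 1))) := by
    rw [← Equiv.sum_comp (Equiv.addRight (Pi.single i 1 : Fin d → ZMod n))]
    simp
  simp_rw [hp, hm, mul_add]
  rw [Finset.sum_add_distrib]
  change _ = ∑ k, ν k * Real.exp (-((n : ℝ) / 2) * (f (k - Pi.single i 1) - f k)) +
    ∑ k, ν k * Real.exp (-((n : ℝ) / 2) * (f (k + Pi.single i 1) - f k)) - _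
  rw [hshift, Finset.mul_sum, ← Finset.sum_add_distrib, ← Finset.sum_sub_distrib]

lemma eventually_IT_le {d : ℕ} {F : (Fin d → ℝ) → ℝ} (hper : PerT d F) (hF : ContDiff ℝ 2 F)
    (μ : Measure (Fin d → ℝ)) [IsProbabilityMeasure μ] {ε : ℝ} (hε : 0 < ε) :
    ∀ᶠ n : ℕ in atTop, IT d F n (fun x => nuT d n (Nat.sqrt n) μ (qT d n x)) ≤
      (∑ x ∈ XiT d n, nuT d n (Nat.sqrt n) μ (qT d n x) * GT d F x) + d * (2 * ε) +
        d * (2 / (Nat.sqrt n : ℝ)) := by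
  have hp : ∀ᶠ n : ℕ in atTop, ∀ i, ∀ x,
      Real.exp (-((n : ℝ) / 2) * (F (x + Pi.single i (((1 : ℤ) : ℝ) / n)) - F x)) ≤
        Real.exp (-((1 : ℤ) : ℝ) * (fderiv ℝ F x (Pi.single i 1) / 2)) + ε :=
    eventually_all.2 fun i => exp_increment_le hper hF i 1 (by simp) hε
  have hm : ∀ᶠ n : ℕ in atTop, ∀ i, ∀ x,
      Real.exp (-((n : ℝ) / 2) * (F (x + Pi.single i (((-1 : ℤ) : ℝ) / n)) - F x)) ≤
        Real.exp (-((-1 : ℤ) : ℝ) * (fderiv ℝ F x (Pi.single i 1) / 2)) + ε :=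
    eventually_all.2 fun i => exp_increment_le hper hF i (-1) (by simp) hε
  filter_upwards [hp, hm, eventually_gt_atTop 0] with n hp hm hn0
  have : NeZero n := ⟨hn0.ne'⟩
  have hM : 0 < Nat.sqrt n := Nat.sqrt_pos.2 hn0
  have hMn := Nat.sqrt_le_self n
  generalize Nat.sqrt n = M at hM hMn ⊢
  refine (IT_le hper (nuT d n M μ) (nuT_nonneg d n M μ)).trans ?_
  rw [sum_XiT]
  simp_rw [qT_pT]
  have h1 : ∀ i : Fin d, ((∑ k, nuT d n M μ k *
        (Real.exp (-((n : ℝ) / 2) *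
            (F (pT d n k + Pi.single i (((-1 : ℤ) : ℝ) / n)) - F (pT d n k))) +
          Real.exp (-((n : ℝ) / 2) *
            (F (pT d n k + Pi.single i (((1 : ℤ) : ℝ) / n)) - F (pT d n k)))))
        - 2 * ∑ k, Real.sqrt (nuT d n M μ k) * Real.sqrt (nuT d n M μ (k + Pi.single i 1))) ≤
      (∑ k, nuT d n M μ k *
        (2 * (Real.cosh (fderiv ℝ F (pT d n k) (Pi.single i 1) / 2) - 1))) + 2 * ε + 2 / M := by
    intro i
    have h2 := overlap_nuT hM hMn μ i
    have h3 : ∑ k, nuT d n M μ k *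
        (Real.exp (-((n : ℝ) / 2) *
            (F (pT d n k + Pi.single i (((-1 : ℤ) : ℝ) / n)) - F (pT d n k))) +
          Real.exp (-((n : ℝ) / 2) *
            (F (pT d n k + Pi.single i (((1 : ℤ) : ℝ) / n)) - F (pT d n k)))) ≤
        ∑ k, (nuT d n M μ k *
        (2 * (Real.cosh (fderiv ℝ F (pT d n k) (Pi.single i 1) / 2) - 1)) +
          nuT d n M μ k * (2 + 2 * ε)) := by
      refine Finset.sum_le_sum fun k _ => ?_
      rw [← mul_add]
      refine mul_le_mul_of_nonneg_left ?_ (nuT_nonneg d n M μ k)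
      have h4 := hp i (pT d n k)
      have h5 := hm i (pT d n k)
      rw [Real.cosh_eq]
      rw [show -((1 : ℤ) : ℝ) * (fderiv ℝ F (pT d n k) (Pi.single i 1) / 2) =
        -(fderiv ℝ F (pT d n k) (Pi.single i 1) / 2) by push_cast; ring] at h4
      rw [show -((-1 : ℤ) : ℝ) * (fderiv ℝ F (pT d n k) (Pi.single i 1) / 2) =
        fderiv ℝ F (pT d n k) (Pi.single i 1) / 2 by push_cast; ring] at h5
      linarith
    rw [Finset.sum_add_distrib, ← Finset.sum_mul, sum_nuT hM hMn μ] at h3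
    have h6 : (2 : ℝ) / M = 2 * (1 / M) := by ring
    rw [h6]
    linarith
  refine (Finset.sum_le_sum fun i _ => h1 i).trans (le_of_eq ?_)
  rw [Finset.sum_add_distrib, Finset.sum_add_distrib, Finset.sum_comm]
  simp only [GT, Finset.mul_sum, Finset.sum_const, Finset.card_univ, Fintype.card_fin,
    nsmul_eq_mul]

/-- Γ-limsup for `ℐ_n`: for every probability measure `μ` on the torus
there is a sequence `μ_n → μ` weakly with `limsup ℐ_n(μ_n) ≤ J(μ) = ∫ G dμ`. -/
theorem stmt12 (d : ℕ) (F : (Fin d → ℝ) → ℝ)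
    (hFper : PerT d F)
    (hFC2 : ContDiff ℝ 2 F)
    (hFLip : ∃ L : NNReal, LipschitzWith L (iteratedFDeriv ℝ 2 F))
    (hFfin : {x : Fin d → ℝ |
      (∀ i, x i ∈ Set.Ico (0 : ℝ) 1) ∧ fderiv ℝ F x = 0}.Finite)
    (μ : Measure (Fin d → ℝ)) (hμ : IsProbabilityMeasure μ)
    (hμsupp : μ (Set.univ.pi fun _ => Set.Ico (0 : ℝ) 1) = 1) :
    ∃ μn : ℕ → (Fin d → ℝ) → ℝ,
      (∀ n, 0 < n →
        (∀ x ∈ XiT d n, 0 ≤ μn n x) ∧ ∑ x ∈ XiT d n, μn n x = 1) ∧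
      (∀ g : (Fin d → ℝ) → ℝ, Continuous g → PerT d g →
        Tendsto (fun n => ∑ x ∈ XiT d n, μn n x * g x) atTop
          (nhds (∫ x, g x ∂μ))) ∧
      limsup (fun n => ENNReal.ofReal (IT d F n (μn n))) atTop ≤
        ENNReal.ofReal (∫ x, GT d F x ∂μ) := by
  refine ⟨fun n x => nuT d n (Nat.sqrt n) μ (qT d n x), ?_, ?_, ?_⟩
  · intro n hn
    have : NeZero n := ⟨hn.ne'⟩
    refine ⟨fun x _ => nuT_nonneg _ _ _ _ _, ?_⟩
    rw [sum_XiT]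
    simp_rw [qT_pT]
    exact sum_nuT (Nat.sqrt_pos.2 hn) (Nat.sqrt_le_self n) μ
  · exact fun g hc hg => tendsto_nuT μ hc hg
  · have hlim : ∀ ε : ℝ, 0 < ε →
        limsup (fun n => ENNReal.ofReal
          (IT d F n (fun x => nuT d n (Nat.sqrt n) μ (qT d n x)))) atTop ≤
        ENNReal.ofReal (∫ x, GT d F x ∂μ + d * (2 * ε)) := by
      intro ε hε
      have h0 : Tendsto (fun n : ℕ => (d : ℝ) * (2 / (Nat.sqrt n : ℝ))) atTop (nhds 0) := by
        have : Tendsto (fun n : ℕ => 2 / (Nat.sqrt n : ℝ)) atTop (nhds 0) :=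
          tendsto_const_nhds.div_atTop (tendsto_natCast_atTop_atTop.comp natSqrt_tendsto)
        simpa using this.const_mul (d : ℝ)
      have h1 := ((tendsto_nuT μ (continuous_GT hFC2) (PerT_GT hFper)).add_const
        ((d : ℝ) * (2 * ε))).add h0
      rw [add_zero] at h1
      rw [← (ENNReal.tendsto_ofReal h1).limsup_eq]
      refine limsup_le_limsup ?_
      filter_upwards [eventually_IT_le hFper hFC2 μ hε] with n hn
      exact ENNReal.ofReal_le_ofReal hn
    have h2 : Tendsto (fun ε : ℝ => ENNReal.ofReal (∫ x, GT d F x ∂μ + d * (2 * ε)))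
        (nhdsWithin 0 (Set.Ioi 0)) (nhds (ENNReal.ofReal (∫ x, GT d F x ∂μ))) := by
      refine ENNReal.tendsto_ofReal ?_
      have : Continuous (fun ε : ℝ => ∫ x, GT d F x ∂μ + d * (2 * ε)) := by fun_prop
      have h3 := this.tendsto 0
      simp only [mul_zero, add_zero] at h3
      exact h3.mono_left nhdsWithin_le_nhds
    refine ge_of_tendsto h2 ?_
    filter_upwards [self_mem_nhdsWithin] with ε hε
    exact hlim ε hε

end
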